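/- Let f : ℝ^d → ℝ be a constant function, and let f̃ : ℝ^d → ℝ be differentiable with |f(x) - f̃(x)| ≤ ε for all x. If v ∈ ℝ^d satisfies ‖v - ∇f̃(x)‖ ≤ ε for all x ∈ ℝ^d, then ‖v‖ ≤ ε. -/

import Mathlib

/-- If `f` is constant, `f̃` is differentiable with `‖f - f̃‖_∞ ≤ ε`, and the vector `v`
satisfies `‖v - ∇f̃(x)‖ ≤ ε` for all `x`, then `‖v‖ ≤ ε`. -/
theorem stmt_2 (d : ℕ) (ε : ℝ) (hε : 0 < ε)
    (f ftilde : EuclideanSpace ℝ (Fin d) → ℝ) (c : ℝ)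
    (hf : ∀ x, f x = c)
    (g : EuclideanSpace ℝ (Fin d) → EuclideanSpace ℝ (Fin d))
    (hgrad : ∀ x, HasGradientAt ftilde (g x) x)
    (happrox : ∀ x, |f x - ftilde x| ≤ ε)
    (v : EuclideanSpace ℝ (Fin d))
    (hv : ∀ x, ‖v - g x‖ ≤ ε) :
    ‖v‖ ≤ ε := by
  by_contra! hlt
  have hder : ∀ t : ℝ, HasDerivAt (fun t : ℝ => ftilde (t • v)) (inner ℝ (g (t • v)) v) t := by
    intro t
    have h1 : HasDerivAt (fun t : ℝ => t • v) v t := by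
      simpa using (hasDerivAt_id t).smul_const v
    have h2 := (hgrad (t • v)).hasFDerivAt.comp_hasDerivAt t h1
    simpa [Function.comp_def] using h2
  have hlow : ∀ t : ℝ, ‖v‖ * (‖v‖ - ε) ≤ inner ℝ (g (t • v)) v := by
    intro t
    have h1 : inner ℝ (v - g (t • v)) v ≤ ‖v - g (t • v)‖ * ‖v‖ := real_inner_le_norm _ _
    have h2 : ‖v - g (t • v)‖ * ‖v‖ ≤ ε * ‖v‖ :=
      mul_le_mul_of_nonneg_right (hv _) (norm_nonneg _)
    rw [inner_sub_left, real_inner_self_eq_norm_sq] at h1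
    nlinarith
  have hδ : 0 < ‖v‖ * (‖v‖ - ε) := mul_pos (hε.trans hlt) (sub_pos.2 hlt)
  set δ := ‖v‖ * (‖v‖ - ε) with hδdef
  have hT : 0 < 3 * ε / δ := by positivity
  obtain ⟨ξ, -, hξ⟩ := exists_hasDerivAt_eq_slope (fun t : ℝ => ftilde (t • v))
    (fun t => inner ℝ (g (t • v)) v) hT
    (fun t _ => (hder t).continuousAt.continuousWithinAt) (fun t _ => hder t)
  have h3 := hlow ξ
  simp only [sub_zero] at hξ
  rw [hξ, le_div_iff₀ hT, mul_div_cancel₀ _ hδ.ne'] at h3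
  have ha := abs_le.1 (happrox ((3 * ε / δ) • v))
  have hb := abs_le.1 (happrox ((0 : ℝ) • v))
  rw [hf] at ha hb
  linarith [ha.1, ha.2, hb.1, hb.2]
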